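/- For all β, m ∈ ℂ, the 1d Whittaker function u(r) := 𝓘_{β,m}(r) is twice differentiable on ]0,∞[ and satisfies the Whittaker equation −u''(r) + (m² − 1/4)·r^{−2}·u(r) − (β/r)·u(r) + (1/4)·u(r) = 0 for all r > 0. -/

import Mathlib

open Complex

/-- Olver-normalized confluent hypergeometric function
`₁𝐅₁(a; c; w) = ∑ (a)ₙ wⁿ/(n! Γ(c+n))`. -/
noncomputable def oneF1reg (a c w : ℂ) : ℂ :=
  ∑' n : ℕ, (ascPochhammer ℂ n).eval a * w ^ n / ((n.factorial : ℂ) * Complex.Gamma (c + n))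

/-- 1d Whittaker function `𝓘_{β,m}(z) = z^{1/2+m} e^{-z/2} ₁𝐅₁(1/2+m-β; 1+2m; z)`
(principal branch powers). -/
noncomputable def whittI (β m z : ℂ) : ℂ :=
  z ^ ((1 : ℂ) / 2 + m) * Complex.exp (-z / 2) * oneF1reg (1 / 2 + m - β) (1 + 2 * m) z


/-- two-term recurrence of the Kummer coefficients -/
def KRec (a c : ℂ) (A : ℕ → ℂ) : Prop :=
  ∀ n : ℕ, (a + n) * A n = (n + 1) * (c + n) * A (n + 1)

lemma KRec.succ {a c : ℂ} {A : ℕ → ℂ} (h : KRec a c A) :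
    KRec (a + 1) (c + 1) (fun n => (n + 1) * A (n + 1)) := by
  intro n
  have := h (n + 1)
  push_cast at this ⊢
  linear_combination ((n : ℂ) + 1) * this

lemma KRec.summable {a c : ℂ} {A : ℕ → ℂ} (h : KRec a c A) (w : ℂ) :
    Summable (fun n => A n * w ^ n) := by
  apply summable_of_ratio_norm_eventually_le (r := 1 / 2) (by norm_num)
  obtain ⟨N, hN⟩ := exists_nat_gt (‖a‖ + 2 * ‖c‖ + 8 * ‖w‖ + 1)
  filter_upwards [Filter.eventually_ge_atTop N] with n hn
  have hn' : ‖a‖ + 2 * ‖c‖ + 8 * ‖w‖ + 1 < (n : ℝ) := hN.trans_le (by exact_mod_cast hn)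
  have ha := norm_nonneg a
  have hc := norm_nonneg c
  have hw := norm_nonneg w
  have h1 : ‖a + n‖ ≤ 2 * n := by
    have := norm_add_le a (n : ℂ)
    rw [Complex.norm_natCast] at this
    linarith
  have h2 : (n : ℝ) / 2 ≤ ‖c + n‖ := by
    have := norm_sub_le (c + n) c
    rw [add_sub_cancel_left, Complex.norm_natCast] at this
    linarith
  have h3 : ‖a + n‖ * ‖A n‖ = (n + 1) * ‖c + n‖ * ‖A (n + 1)‖ := by
    rw [← norm_mul, h n, norm_mul, norm_mul]
    congr 2
    exact_mod_cast Complex.norm_natCast (n + 1)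
  have hA := norm_nonneg (A n)
  have hA' := norm_nonneg (A (n + 1))
  have hn0 : (0 : ℝ) < n := by linarith
  have h4 : ((n : ℝ) + 1) * (n / 2) * ‖A (n + 1)‖ ≤ 2 * n * ‖A n‖ := by
    calc _ ≤ (n + 1) * ‖c + n‖ * ‖A (n + 1)‖ := by gcongr
      _ = ‖a + n‖ * ‖A n‖ := h3.symm
      _ ≤ _ := by gcongr
  have h5 : ((n : ℝ) + 1) * ‖A (n + 1)‖ ≤ 4 * ‖A n‖ := by
    refine le_of_mul_le_mul_left ?_ hn0
    linarith
  have h6 : ‖A (n + 1)‖ * ‖w‖ ≤ 1 / 2 * ‖A n‖ := by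
    have : 8 * ‖w‖ * ‖A (n + 1)‖ ≤ (n + 1) * ‖A (n + 1)‖ := by
      gcongr
      linarith
    linarith
  rw [norm_mul, norm_mul, norm_pow, norm_pow, pow_succ]
  calc _ = (‖A (n + 1)‖ * ‖w‖) * ‖w‖ ^ n := by ring
    _ ≤ (1 / 2 * ‖A n‖) * ‖w‖ ^ n := by gcongr
    _ = _ := by ring

lemma KRec.hasDerivAt {a c : ℂ} {A : ℕ → ℂ} (h : KRec a c A) (w : ℂ) :
    HasDerivAt (fun z => ∑' n, A n * z ^ n) (∑' n : ℕ, ((n + 1) * A (n + 1)) * w ^ n) w := by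
  set R : ℝ := ‖w‖ + 1
  have hR : 0 ≤ R := by positivity
  have hs := (h.succ.summable (R : ℂ)).norm
  have hb : Summable (fun n : ℕ => ‖(n : ℂ) * A n‖ * R ^ (n - 1)) := by
    rw [← summable_nat_add_iff 1]
    refine hs.congr fun n => ?_
    rw [norm_mul, norm_pow, Complex.norm_real, Real.norm_of_nonneg hR]
    push_cast
    simp
  have key := hasDerivAt_tsum_of_isPreconnected (g := fun n z => A n * z ^ n)
    (g' := fun n z => (n : ℂ) * A n * z ^ (n - 1)) (t := Metric.ball 0 R) (y₀ := 0) (y := w)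
    hb Metric.isOpen_ball (convex_ball _ _).isPreconnected
    (fun n y _ => by
      refine ((hasDerivAt_pow n y).const_mul (A n)).congr_deriv ?_
      ring)
    (fun n y hy => by
      rw [norm_mul, norm_pow]
      have : ‖y‖ ≤ R := by
        rw [mem_ball_zero_iff] at hy
        exact hy.le
      gcongr)
    (by rw [mem_ball_zero_iff, norm_zero]; positivity)
    (h.summable 0)
    (by rw [mem_ball_zero_iff]; simp [R])
  refine key.congr_deriv ?_
  have hs2 : Summable (fun n : ℕ => (n : ℂ) * A n * w ^ (n - 1)) := by
    rw [← summable_nat_add_iff 1]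
    refine (h.succ.summable w).congr fun n => ?_
    push_cast
    simp
  rw [hs2.tsum_eq_zero_add]
  simp

lemma KRec.mul_deriv {a c : ℂ} {A : ℕ → ℂ} (h : KRec a c A) (w : ℂ) :
    HasSum (fun n : ℕ => n * A n * w ^ n) (w * ∑' n : ℕ, ((n + 1) * A (n + 1)) * w ^ n) := by
  rw [← hasSum_nat_add_iff' 1]
  have := (h.succ.summable w).hasSum.mul_left w
  simp only [Finset.range_one, Finset.sum_singleton, Nat.cast_zero, zero_mul, sub_zero]
  refine this.congr_fun ?_
  intro n
  push_cast
  ring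

lemma KRec.ode {a c : ℂ} {A : ℕ → ℂ} (h : KRec a c A) (w : ℂ) :
    w * (∑' n : ℕ, ((n + 1) * (((n + 1 : ℕ) + 1) * A (n + 1 + 1))) * w ^ n) +
      (c - w) * (∑' n : ℕ, ((n + 1) * A (n + 1)) * w ^ n) - a * ∑' n : ℕ, A n * w ^ n = 0 := by
  have s1 := h.succ.mul_deriv w
  have s2 := (h.succ.summable w).hasSum.mul_left c
  have s3 := h.mul_deriv w
  have s4 := (h.summable w).hasSum.mul_left a
  have s := ((s1.add s2).sub s3).sub s4
  have z : HasSum (fun _ : ℕ => (0 : ℂ)) 0 := hasSum_zero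
  have e := s.unique (z.congr_fun fun n => ?_)
  · linear_combination e
  · linear_combination -(w ^ n) * h n

lemma oneF1reg_ode (a c : ℂ) : ∃ F1 F2 : ℂ → ℂ,
    (∀ w, HasDerivAt (oneF1reg a c) (F1 w) w) ∧ (∀ w, HasDerivAt F1 (F2 w) w) ∧
    ∀ w, w * F2 w + (c - w) * F1 w - a * oneF1reg a c w = 0 := by
  set A : ℕ → ℂ := fun n =>
    (ascPochhammer ℂ n).eval a / ((n.factorial : ℂ) * Complex.Gamma (c + n)) with hA
  have hF : oneF1reg a c = fun w => ∑' n, A n * w ^ n := by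
    funext w
    unfold oneF1reg
    refine tsum_congr fun n => ?_
    simp only [hA]
    ring
  have h : KRec a c A := by
    intro n
    have g := Complex.one_div_Gamma_eq_self_mul_one_div_Gamma_add_one (c + n)
    have hf : (n.factorial : ℂ) ≠ 0 := by exact_mod_cast n.factorial_ne_zero
    have hn : (n : ℂ) + 1 ≠ 0 := by exact_mod_cast n.succ_ne_zero
    simp only [hA, ascPochhammer_succ_eval, Nat.factorial_succ]
    push_cast
    rw [← add_assoc]
    simp only [div_eq_mul_inv, mul_inv] at g ⊢
    rw [g]
    field_simp
  rw [hF]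
  exact ⟨_, _, h.hasDerivAt, h.succ.hasDerivAt, h.ode⟩

/-- for all `β, m ∈ ℂ`, `u(r) = 𝓘_{β,m}(r)` is twice differentiable on
`]0,∞[` and satisfies the Whittaker equation
`-u'' + (m²-1/4) r⁻² u - (β/r) u + (1/4) u = 0`. -/
theorem whittI_satisfies_whittaker_equation (β m : ℂ) :
    ∀ r : ℝ, 0 < r →
      (DifferentiableAt ℝ (fun r : ℝ => whittI β m r) r ∧
        DifferentiableAt ℝ (deriv fun r : ℝ => whittI β m r) r) ∧
      -deriv (deriv fun r : ℝ => whittI β m r) r +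
          (m ^ 2 - 1 / 4) / (r : ℂ) ^ 2 * whittI β m r -
          β / (r : ℂ) * whittI β m r + 1 / 4 * whittI β m r = 0 := by
  intro r hr
  obtain ⟨F1, F2, h1, h2, h3⟩ := oneF1reg_ode (1 / 2 + m - β) (1 + 2 * m)
  set F := oneF1reg (1 / 2 + m - β) (1 + 2 * m) with hF
  set P : ℂ → ℂ := fun z => z ^ ((1 : ℂ) / 2 + m) * Complex.exp (-z / 2) with hPdef
  have hP : ∀ z ∈ slitPlane, HasDerivAt P ((((1 : ℂ) / 2 + m) / z - 1 / 2) * P z) z := by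
    intro z hz
    have hz0 : z ≠ 0 := slitPlane_ne_zero hz
    have e1 := (hasDerivAt_id z).cpow_const (c := (1 : ℂ) / 2 + m) hz
    have e2 : HasDerivAt (fun z : ℂ => Complex.exp (-z / 2)) (Complex.exp (-z / 2) * (-1 / 2)) z :=
      (((hasDerivAt_id z).neg).div_const 2).cexp
    have e3 := e1.mul e2
    refine e3.congr_deriv ?_
    simp only [id, hPdef]
    rw [Complex.cpow_sub _ _ hz0, Complex.cpow_one]
    field_simp
    ring
  have hu : ∀ z : ℂ, whittI β m z = P z * F z := fun z => rfl
  have hQ : ∀ x : ℝ, 0 < x → HasDerivAt (fun r : ℝ => whittI β m r)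
      (P x * ((((1 : ℂ) / 2 + m) / x - 1 / 2) * F x + F1 x)) x := by
    intro x hx
    have hxs : (x : ℂ) ∈ slitPlane := by simp [hx]
    have e := ((hP x hxs).mul (h1 x)).comp_ofReal
    refine e.congr_deriv ?_
    ring
  have hR : HasDerivAt (deriv fun r : ℝ => whittI β m r)
      (((((1 : ℂ) / 2 + m) / r - 1 / 2) * P r) * ((((1 : ℂ) / 2 + m) / r - 1 / 2) * F r + F1 r) +
        P r * ((-((1 : ℂ) / 2 + m) / (r : ℂ) ^ 2) * F r +
          (((1 : ℂ) / 2 + m) / r - 1 / 2) * F1 r + F2 r)) r := by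
    have hrs : (r : ℂ) ∈ slitPlane := by simp [hr]
    have hr0 : (r : ℂ) ≠ 0 := slitPlane_ne_zero hrs
    have hd : HasDerivAt (fun z : ℂ => ((1 : ℂ) / 2 + m) / z - 1 / 2)
        (-((1 : ℂ) / 2 + m) / (r : ℂ) ^ 2) r := by
      have := ((hasDerivAt_inv hr0).const_mul ((1 : ℂ) / 2 + m)).sub_const (1 / 2)
      refine this.congr_deriv ?_
      field_simp
    have e := ((hP r hrs).mul ((hd.mul (h1 r)).add (h2 r))).comp_ofReal
    have e' := e.congr_of_eventuallyEq (f₁ := deriv fun r : ℝ => whittI β m r) (by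
      filter_upwards [lt_mem_nhds hr] with x hx
      exact (hQ x hx).deriv)
    exact e'
  refine ⟨⟨(hQ r hr).differentiableAt, hR.differentiableAt⟩, ?_⟩
  rw [hR.deriv, hu]
  have hr0 : (r : ℂ) ≠ 0 := by exact_mod_cast hr.ne'
  have := h3 r
  have hF2 : F2 r = ((1 / 2 + m - β) * F r - (1 + 2 * m - r) * F1 r) / r := by
    rw [eq_div_iff hr0]
    linear_combination this
  rw [hF2]
  field_simp
  ring
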